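/- arXiv:1110.1963 — 2 statements merged into one kernel-verified Lean document; each statement's English description precedes it below -/
import Mathlib

section
/- (Main theorem) Let s = ρ_{d+1}(I) − ρ_{d+1}(J) be the number of square-free monomials of degree d+1 lying in I \ J. If r > s, then depth_S (I/J) = d, independently of the characteristic of K. -/
open MvPolynomial

/-- The square-free monomial `∏ i ∈ T, X i` associated to a set `T` of variables. -/
noncomputable def sqMon (K : Type) [Field K] {n : ℕ} (T : Finset (Fin n)) :
    MvPolynomial (Fin n) K :=
  ∏ i ∈ T, X i

/-- `GenBySqMonOfDeg K P I` means: `I` is generated by square-free monomials whose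
degrees satisfy the predicate `P`. -/
def GenBySqMonOfDeg (K : Type) [Field K] {n : ℕ} (P : ℕ → Prop)
    (I : Ideal (MvPolynomial (Fin n) K)) : Prop :=
  ∃ G : Set (Finset (Fin n)), (∀ T ∈ G, P T.card) ∧ I = Ideal.span (sqMon K '' G)

/-- `rho K d I` : the number of square-free monomials of degree `d` belonging to `I`. -/
noncomputable def rho (K : Type) [Field K] {n : ℕ} (d : ℕ)
    (I : Ideal (MvPolynomial (Fin n) K)) : ℕ :=
  Set.ncard {T : Finset (Fin n) | T.card = d ∧ sqMon K T ∈ I}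

/-- The maximal graded ideal `(x_1, …, x_n)` of `K[x_1, …, x_n]`. -/
noncomputable def maxGraded (K : Type) [Field K] (n : ℕ) :
    Ideal (MvPolynomial (Fin n) K) :=
  Ideal.span (Set.range (X : Fin n → MvPolynomial (Fin n) K))

/-- The depth of the module `M` with respect to the ideal `I` : the supremum of the
lengths of `M`-regular sequences consisting of elements of `I`. -/
noncomputable def moduleDepth {R : Type} [CommRing R] (I : Ideal R)
    (M : Type) [AddCommGroup M] [Module R M] : ℕ∞ :=
  sSup {k : ℕ∞ | ∃ rs : List R, k = (rs.length : ℕ∞) ∧ (∀ r ∈ rs, r ∈ I) ∧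
    RingTheory.Sequence.IsRegular M rs}

/-- The `R`-module `I/J` (more precisely `I/(I ∩ J)`, which is `I/J` when `J ≤ I`). -/
noncomputable abbrev idealQuot {R : Type} [CommRing R] (I J : Ideal R) : Type :=
  ↥I ⧸ (Submodule.comap I.subtype (J : Submodule R R))

/-!
A nonzero class of degree `d` in the Koszul cohomology of `M` on `x` bounds the length of every
`M`-regular sequence in `(x)` by `d`: dividing by the first element of the sequence lowers the
degree of the class by one. For `M = I / J` and the variables `x`, a family of scalars `c A` on the
square-free monomials of degree `d` in `I` is a cocycle as soon as `∑ ± c (A \ {i})` vanishes for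
each of the `s` square-free monomials of degree `d + 1` in `I \ J`. When there are more unknowns
than these `s` equations, a nonzero solution exists, and it is not a coboundary because its entries
have degree `d`. Hence the depth is at most `d`.

Conversely, adjoining the square-free monomials of `I` to `J` one at a time, larger ones first,
filters `I / J` with quotients `S / (X j : j ∉ T)`, where `|T| ≥ d`. Each has depth at least `d`,
and Rees' characterization of depth by the vanishing of `Ext` carries this bound to `I / J`.
-/

section Koszul

open scoped Pointwise

variable {ι : Type*} [LinearOrder ι]

/-- The sign of the permutation moving `eᵢ` to its place in the ordered exterior product of the
basis vectors indexed by `A`, that is `eᵢ ∧ e_A = koszulSign i A • e_(insert i A)` for `i ∉ A`. -/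
def koszulSign (i : ι) (A : Finset ι) : ℤ := (-1) ^ (A.filter (· < i)).card

lemma koszulSign_mul_self (i : ι) (A : Finset ι) : koszulSign i A * koszulSign i A = 1 :=
  pow_mul_pow_eq_one _ (by norm_num)

lemma koszulSign_insert {i j : ι} {A : Finset ι} (hj : j ∉ A) :
    koszulSign i (insert j A) = if j < i then -koszulSign i A else koszulSign i A := by
  split_ifs with h <;> simp [koszulSign, Finset.filter_insert, h, hj, pow_succ]

lemma koszulSign_insert_self (i : ι) (A : Finset ι) :
    koszulSign i (insert i A) = koszulSign i A := by
  simp [koszulSign, Finset.filter_insert]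

lemma koszulSign_insert_mul_koszulSign {i j : ι} {A : Finset ι} (hij : i ≠ j) (hi : i ∉ A)
    (hj : j ∉ A) :
    koszulSign i (insert j A) * koszulSign j A = -(koszulSign j (insert i A) * koszulSign i A) := by
  rcases lt_or_gt_of_ne hij with h | h <;>
    simp [koszulSign_insert, hi, hj, h, h.le, mul_comm (koszulSign i A)]

lemma koszulSign_insert_mul_koszulSign_insert {i j : ι} {A : Finset ι} (hij : i ≠ j) (hi : i ∉ A)
    (hj : j ∉ A) :
    koszulSign j (insert i A) * koszulSign i (insert j A) =
      -(koszulSign i A * koszulSign j A) := by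
  rcases lt_or_gt_of_ne hij with h | h <;>
    simp [koszulSign_insert, hi, hj, h, h.le, mul_comm (koszulSign i A)]

variable {R M : Type*} [CommRing R] [AddCommGroup M] [Module R M]

variable (R) in
/-- Left exterior multiplication by `eᵢ` on `M ⊗ ⋀ R^ι`, an element of which is recorded as the
family of its coefficients, indexed by the subsets of `ι`. -/
def wedge (i : ι) : (Finset ι → M) →ₗ[R] (Finset ι → M) where
  toFun φ A := if i ∈ A then koszulSign i A • φ (A.erase i) else 0
  map_add' φ ψ := by ext A; by_cases hi : i ∈ A <;> simp [hi]
  map_smul' a φ := by ext A; by_cases hi : i ∈ A <;> simp [hi, smul_comm _ a]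

variable (R) in
/-- Contraction with the dual basis vector of `eᵢ`, on the same families as `wedge`. -/
def contract (i : ι) : (Finset ι → M) →ₗ[R] (Finset ι → M) where
  toFun φ A := if i ∈ A then 0 else koszulSign i A • φ (insert i A)
  map_add' φ ψ := by ext A; by_cases hi : i ∈ A <;> simp [hi]
  map_smul' a φ := by ext A; by_cases hi : i ∈ A <;> simp [hi, smul_comm _ a]

lemma wedge_apply (i : ι) (φ : Finset ι → M) (A : Finset ι) :
    wedge R i φ A = if i ∈ A then koszulSign i A • φ (A.erase i) else 0 := rfl

lemma contract_apply (i : ι) (φ : Finset ι → M) (A : Finset ι) :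
    contract R i φ A = if i ∈ A then 0 else koszulSign i A • φ (insert i A) := rfl

lemma wedge_apply_insert {i : ι} {A : Finset ι} (hi : i ∉ A) (φ : Finset ι → M) :
    wedge R i φ (insert i A) = koszulSign i A • φ A := by
  simp [wedge_apply, koszulSign_insert_self, hi]

lemma wedge_wedge_self (i : ι) (φ : Finset ι → M) : wedge R i (wedge R i φ) = 0 := by
  ext A
  simp [wedge_apply]

lemma wedge_anticomm {i j : ι} (hij : i ≠ j) (φ : Finset ι → M) :
    wedge R i (wedge R j φ) = -wedge R j (wedge R i φ) := by
  ext A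
  by_cases hi : i ∈ A
  swap
  · simp [wedge_apply, hi]
  by_cases hj : j ∈ A
  swap
  · simp [wedge_apply, hj]
  obtain ⟨B, hiB, rfl⟩ : ∃ B, i ∉ B ∧ insert i B = A :=
    ⟨A.erase i, A.notMem_erase i, Finset.insert_erase hi⟩
  obtain ⟨C, hjC, rfl⟩ : ∃ C, j ∉ C ∧ insert j C = B :=
    ⟨B.erase j, B.notMem_erase j, Finset.insert_erase (Finset.mem_of_mem_insert_of_ne hj hij.symm)⟩
  have hiC : i ∉ C := fun h => hiB (Finset.mem_insert_of_mem h)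
  have hjiC : j ∉ insert i C := by simp [hij.symm, hjC]
  rw [wedge_apply_insert hiB, wedge_apply_insert hjC, Pi.neg_apply, Finset.insert_comm,
    wedge_apply_insert hjiC, wedge_apply_insert hiC, smul_smul, smul_smul, ← neg_smul,
    koszulSign_insert_mul_koszulSign hij hiC hjC]

lemma contract_wedge_self_add (i : ι) (φ : Finset ι → M) :
    contract R i (wedge R i φ) + wedge R i (contract R i φ) = φ := by
  ext A
  by_cases hi : i ∈ A
  · obtain ⟨B, hiB, rfl⟩ : ∃ B, i ∉ B ∧ insert i B = A :=
      ⟨A.erase i, A.notMem_erase i, Finset.insert_erase hi⟩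
    simp [contract_apply, wedge_apply_insert, hiB, smul_smul, koszulSign_mul_self]
  · simp [contract_apply, wedge_apply_insert, wedge_apply i (contract R i φ), hi, smul_smul,
      koszulSign_mul_self]

lemma contract_wedge_of_ne {i j : ι} (hij : i ≠ j) (φ : Finset ι → M) :
    contract R j (wedge R i φ) = -wedge R i (contract R j φ) := by
  ext A
  by_cases hj : j ∈ A
  · simp [contract_apply, wedge_apply, hj, hij.symm]
  by_cases hi : i ∈ A
  · obtain ⟨B, hiB, rfl⟩ : ∃ B, i ∉ B ∧ insert i B = A :=
      ⟨A.erase i, A.notMem_erase i, Finset.insert_erase hi⟩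
    have hjB : j ∉ B := fun h => hj (Finset.mem_insert_of_mem h)
    have hijB : i ∉ insert j B := by simp [hij, hiB]
    rw [contract_apply, if_neg hj, Finset.insert_comm, wedge_apply_insert hijB, Pi.neg_apply,
      wedge_apply_insert hiB, contract_apply, if_neg hjB, smul_smul, smul_smul, ← neg_smul,
      koszulSign_insert_mul_koszulSign_insert hij hiB hjB]
  · simp [contract_apply, wedge_apply, hi, hij]

variable [Fintype ι]

/-- The differential of the Koszul cochain complex of `M` on the family `x`, in all degrees at
once: exterior multiplication by `∑ xᵢ eᵢ`. A cochain of degree `d` is a family supported on the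
subsets of cardinality `d`. -/
def koszulDiff (x : ι → R) : (Finset ι → M) →ₗ[R] (Finset ι → M) := ∑ i, x i • wedge R i

variable (x : ι → R)

lemma koszulDiff_eq_sum (φ : Finset ι → M) : koszulDiff x φ = ∑ i, x i • wedge R i φ := by
  simp [koszulDiff]

lemma koszulDiff_apply (φ : Finset ι → M) (A : Finset ι) :
    koszulDiff x φ A = ∑ i ∈ A, koszulSign i A • x i • φ (A.erase i) := by
  simp [koszulDiff_eq_sum, wedge_apply, Finset.sum_ite_mem, smul_comm (x _)]

lemma koszulDiff_comp {N : Type*} [AddCommGroup N] [Module R N] (f : M →ₗ[R] N)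
    (φ : Finset ι → M) : koszulDiff x (f ∘ φ) = f ∘ koszulDiff x φ := by
  ext A
  simp [koszulDiff_apply]

lemma koszulDiff_apply_mem_smul_top (φ : Finset ι → M) (A : Finset ι) :
    koszulDiff x φ A ∈ Ideal.span (Set.range x) • (⊤ : Submodule R M) := by
  rw [koszulDiff_apply]
  exact Submodule.sum_mem _ fun i _ => zsmul_mem
    (Submodule.smul_mem_smul (Ideal.subset_span (Set.mem_range_self i)) Submodule.mem_top) _

lemma koszulDiff_koszulDiff (φ : Finset ι → M) : koszulDiff x (koszulDiff x φ) = 0 := by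
  simp only [koszulDiff_eq_sum, map_sum, map_smul, Finset.smul_sum, smul_smul,
    ← Finset.sum_product']
  refine Finset.sum_involution (fun p _ => p.swap) ?_ ?_ (by simp) (by simp)
  · rintro ⟨i, j⟩ -
    rcases eq_or_ne i j with rfl | hij
    · simp [wedge_wedge_self]
    · simp [wedge_anticomm hij, mul_comm (x i)]
  · rintro ⟨i, j⟩ - hne heq
    obtain rfl : j = i := congrArg Prod.fst heq
    exact hne (by simp [wedge_wedge_self])

lemma contract_koszulDiff_add (j : ι) (φ : Finset ι → M) :
    contract R j (koszulDiff x φ) + koszulDiff x (contract R j φ) = x j • φ := by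
  simp only [koszulDiff_eq_sum, map_sum, map_smul, ← Finset.sum_add_distrib, ← smul_add]
  rw [Finset.sum_eq_single j, contract_wedge_self_add]
  · intro i _ hij
    rw [contract_wedge_of_ne hij, neg_add_cancel, smul_zero]
  · simp

variable {x} {d : ℕ} {φ : Finset ι → M}

lemma koszulDiff_apply_eq_zero (hsupp : ∀ A, A.card ≠ d → φ A = 0) {A : Finset ι}
    (hA : A.card ≠ d + 1) : koszulDiff x φ A = 0 := by
  rw [koszulDiff_apply]
  refine Finset.sum_eq_zero fun i hi => ?_
  rw [hsupp _ fun h => hA (by rw [← h, Finset.card_erase_add_one hi]), smul_zero, smul_zero]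

lemma exists_koszulDiff_eq_smul (hsupp : ∀ A, A.card ≠ d → φ A = 0) (hφ : koszulDiff x φ = 0)
    {a : R} (ha : a ∈ Ideal.span (Set.range x)) :
    ∃ ψ, (∀ A, A.card + 1 ≠ d → ψ A = 0) ∧ koszulDiff x ψ = a • φ := by
  obtain ⟨c, rfl⟩ := Ideal.mem_span_range_iff_exists_fun.1 ha
  refine ⟨∑ i, c i • contract R i φ, fun A hA => ?_, ?_⟩
  · have hzero : ∀ i, contract R i φ A = 0 := fun i => by
      rw [contract_apply]
      split_ifs with hi
      · rfl
      · rw [hsupp _ (by rwa [Finset.card_insert_of_notMem hi]), smul_zero]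
    simp [hzero]
  · have hcontract : ∀ i, koszulDiff x (contract R i φ) = x i • φ := fun i => by
      simpa [hφ] using contract_koszulDiff_add x i φ
    simp [hcontract, smul_smul, Finset.sum_smul]

lemma exists_koszulDiff_eq_of_comp_mkQ {a : R} (ha : IsSMulRegular M a) {ψ : Finset ι → M}
    (hψ : koszulDiff x ψ = a • φ) {ζ : Finset ι → QuotSMulTop a M}
    (hζ : koszulDiff x ζ = (a • (⊤ : Submodule R M)).mkQ ∘ ψ) : ∃ η, koszulDiff x η = φ := by
  obtain ⟨ζ', rfl⟩ := (Submodule.mkQ_surjective (a • (⊤ : Submodule R M))).comp_left ζ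
  have hlift : ∀ A, ∃ y, a • y = (ψ - koszulDiff x ζ') A := fun A => by
    have hA := congrFun hζ A
    rw [koszulDiff_comp, eq_comm, Function.comp_apply, Function.comp_apply, ← sub_eq_zero,
      ← map_sub, Submodule.mkQ_apply, Submodule.Quotient.mk_eq_zero] at hA
    obtain ⟨y, -, hy⟩ := hA
    exact ⟨y, hy⟩
  choose η hη using hlift
  have hsmul : a • koszulDiff x η = a • φ := calc
    a • koszulDiff x η = koszulDiff x (ψ - koszulDiff x ζ') := by
      rw [← map_smul]
      exact congrArg _ (funext hη)
    _ = a • φ := by rw [map_sub, koszulDiff_koszulDiff, hψ, sub_zero]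
  exact ⟨η, funext fun A => ha (congrFun hsmul A)⟩

theorem length_le_of_koszulDiff_eq_zero {rs : List R}
    (hsupp : ∀ A, A.card ≠ d → φ A = 0) (hφ : koszulDiff x φ = 0) (hne : ∀ ψ, koszulDiff x ψ ≠ φ)
    (hrs : ∀ r ∈ rs, r ∈ Ideal.span (Set.range x))
    (hreg : RingTheory.Sequence.IsWeaklyRegular M rs) : rs.length ≤ d := by
  induction rs generalizing M d with
  | nil => exact Nat.zero_le d
  | cons a rs ih =>
    rw [RingTheory.Sequence.isWeaklyRegular_cons_iff] at hreg
    rw [List.forall_mem_cons] at hrs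
    obtain ⟨ψ, hψsupp, hψ⟩ := exists_koszulDiff_eq_smul hsupp hφ hrs.1
    have hψne : ∀ ζ : Finset ι → QuotSMulTop a M,
        koszulDiff x ζ ≠ (a • (⊤ : Submodule R M)).mkQ ∘ ψ := fun ζ hζ =>
      have ⟨η, hη⟩ := exists_koszulDiff_eq_of_comp_mkQ hreg.1 hψ hζ
      hne η hη
    obtain _ | d := d
    · have hψ0 : ψ = 0 := funext fun A => hψsupp A A.card.succ_ne_zero
      exact absurd (by ext; simp [hψ0]) (hψne 0)
    · refine Nat.succ_le_succ
        (ih (φ := (a • (⊤ : Submodule R M)).mkQ ∘ ψ) (fun A hA => ?_) ?_ hψne hrs.2 hreg.2)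
      · rw [Function.comp_apply, hψsupp A (by omega), map_zero]
      · rw [koszulDiff_comp, hψ]
        ext A
        exact (Submodule.Quotient.mk_eq_zero _).2
          (Submodule.smul_mem_pointwise_smul _ _ _ Submodule.mem_top)

end Koszul

section IdealQuotients

lemma mem_mul_sup_of_mk_mem_smul_top {R : Type} [CommRing R] {𝔪 I J : Ideal R} {u : I}
    (hu : (Submodule.Quotient.mk u : idealQuot I J) ∈ 𝔪 • (⊤ : Submodule R (idealQuot I J))) :
    (u : R) ∈ 𝔪 * I ⊔ J := by
  rw [← Submodule.range_mkQ, ← Submodule.map_top, ← Submodule.map_smul''] at hu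
  obtain ⟨v, hv, hvu⟩ := hu
  have hvmul : (v : R) ∈ 𝔪 * I := by
    have := Submodule.mem_map_of_mem (f := I.subtype) hv
    rwa [Submodule.map_smul'', Submodule.map_top, Submodule.range_subtype] at this
  have huv : (u : R) - v ∈ J := (Submodule.Quotient.eq (Submodule.comap I.subtype J)).1 hvu.symm
  rw [← add_sub_cancel (v : R) u]
  exact add_mem (Ideal.mem_sup_left hvmul) (Ideal.mem_sup_right huv)

lemma ideal_smul_top_quotient_ne_top {R : Type*} [CommRing R] {𝔞 P : Ideal R} (hP : P ≤ 𝔞)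
    (h𝔞 : 𝔞 ≠ ⊤) : 𝔞 • (⊤ : Submodule R (R ⧸ P)) ≠ ⊤ := fun htop => h𝔞 <| by
  rw [← Submodule.range_mkQ, ← Submodule.map_top, ← Submodule.map_smul'', smul_eq_mul,
    Ideal.mul_top] at htop
  simpa only [Submodule.comap_map_mkQ, sup_eq_right.2 hP, Submodule.map_top, Submodule.range_mkQ,
    Submodule.comap_top] using congrArg (Submodule.comap P.mkQ) htop

end IdealQuotients

section ExtVanishing

open CategoryTheory Abelian

universe u

variable {R : Type u} [CommRing R] {𝔞 : Ideal R} {d : ℕ}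
  {M N P : Type u} [AddCommGroup M] [Module R M] [AddCommGroup N] [Module R N]
  [AddCommGroup P] [Module R P]

/-- The modules `Extⁱ(R ⧸ 𝔞, M)` vanish for `i < d`: the homological form of the inequality
`depth 𝔞 M ≥ d`. -/
def ExtVanishesBelow (𝔞 : Ideal R) (d : ℕ) (M : Type u) [AddCommGroup M] [Module R M] : Prop :=
  ∀ i < d, Subsingleton (Ext (ModuleCat.of R (R ⧸ 𝔞)) (ModuleCat.of R M) i)

namespace ExtVanishesBelow

lemma of_subsingleton [Subsingleton M] : ExtVanishesBelow 𝔞 d M := fun i _ => by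
  have hid : 𝟙 (ModuleCat.of R M) = 0 :=
    (ModuleCat.isZero_of_subsingleton (ModuleCat.of R M)).eq_of_tgt _ _
  refine subsingleton_of_forall_eq 0 fun x => ?_
  rw [← x.comp_mk₀_id, hid, Ext.mk₀_zero, Ext.comp_zero]

lemma of_exact {f : M →ₗ[R] N} {g : N →ₗ[R] P} (hf : Function.Injective f)
    (hfg : Function.Exact f g) (hg : Function.Surjective g) (hM : ExtVanishesBelow 𝔞 d M)
    (hP : ExtVanishesBelow 𝔞 d P) : ExtVanishesBelow 𝔞 d N := fun i hi => by
  have hS := ModuleCat.shortComplex_shortExact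
    (ModuleCat.shortComplexOfCompEqZero f g hfg.linearMap_comp_eq_zero) hfg hf hg
  have := hM i hi
  have := hP i hi
  refine subsingleton_of_forall_eq 0 fun x => ?_
  obtain ⟨y, rfl⟩ := Ext.covariant_sequence_exact₂ _ hS x (Subsingleton.elim _ _)
  rw [Subsingleton.elim y 0, Ext.zero_comp]

variable [IsNoetherianRing R] [Module.Finite R M]

lemma of_isWeaklyRegular (h𝔞 : 𝔞 • (⊤ : Submodule R M) ≠ ⊤) {rs : List R}
    (hrs : ∀ r ∈ rs, r ∈ 𝔞) (hreg : RingTheory.Sequence.IsWeaklyRegular M rs)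
    (hd : d ≤ rs.length) : ExtVanishesBelow 𝔞 d M := fun i hi => by
  have hle : Ideal.ofList rs • (⊤ : Submodule R M) ≤ 𝔞 • ⊤ :=
    Submodule.smul_mono_left (Ideal.span_le.2 hrs)
  refine ModuleCat.subsingleton_ext_of_exists_isRegular 𝔞 _ ?_ (ModuleCat.of R M) h𝔞.lt_top rs hrs
    ⟨hreg, fun h => h𝔞 (top_le_iff.1 (h.trans_le hle))⟩ i (hi.trans_le hd)
  rw [Module.support_eq_zeroLocus, Ideal.annihilator_quotient]

lemma exists_isRegular (hM : ExtVanishesBelow 𝔞 d M) (h𝔞 : 𝔞 • (⊤ : Submodule R M) ≠ ⊤) :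
    ∃ rs : List R, rs.length = d ∧ (∀ r ∈ rs, r ∈ 𝔞) ∧ RingTheory.Sequence.IsRegular M rs :=
  ModuleCat.exists_isRegular_of_exists_subsingleton_ext 𝔞 d (ModuleCat.of R M) h𝔞.lt_top
    (ModuleCat.of R (R ⧸ 𝔞)) (by rw [Module.support_eq_zeroLocus, Ideal.annihilator_quotient]) hM

end ExtVanishesBelow

lemma ExtVanishesBelow.idealQuot_of_colon {R : Type} [CommRing R] {𝔞 I J : Ideal R} {d : ℕ} {s : R}
    (hs : s ∈ I) (hcolon : ExtVanishesBelow 𝔞 d (R ⧸ Submodule.colon J {s}))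
    (hsup : ExtVanishesBelow 𝔞 d (idealQuot I (Ideal.span {s} ⊔ J))) :
    ExtVanishesBelow 𝔞 d (idealQuot I J) := by
  let mulS : R →ₗ[R] idealQuot I J := LinearMap.toSpanSingleton R _ (Submodule.Quotient.mk ⟨s, hs⟩)
  have hker : mulS.ker = Submodule.colon J {s} := by
    ext a
    rw [LinearMap.mem_ker, Submodule.mem_colon_singleton]
    exact Submodule.Quotient.mk_eq_zero _
  have hle : Submodule.comap I.subtype J ≤ Submodule.comap I.subtype (Ideal.span {s} ⊔ J) :=
    Submodule.comap_mono le_sup_right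
  refine of_exact (f := Submodule.liftQ _ mulS hker.ge) (g := Submodule.factor hle)
    (LinearMap.ker_eq_bot.1 (Submodule.ker_liftQ_eq_bot _ _ _ hker.le)) ?_
    (Submodule.factor_surjective hle) hcolon hsup
  rw [LinearMap.exact_iff, Submodule.range_liftQ]
  ext y
  obtain ⟨u, rfl⟩ := Submodule.Quotient.mk_surjective _ y
  calc Submodule.Quotient.mk u ∈ LinearMap.ker (Submodule.factor hle)
    _ ↔ (u : R) ∈ Ideal.span {s} ⊔ J :=
      Submodule.Quotient.mk_eq_zero (Submodule.comap I.subtype (Ideal.span {s} ⊔ J))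
    _ ↔ ∃ a, a * s - u ∈ J := by
      rw [Ideal.mem_span_singleton_sup]
      exact exists_congr fun a =>
        ⟨fun ⟨b, hb, hab⟩ => by simpa [← hab] using hb,
          fun h => ⟨u - a * s, by simpa using neg_mem h, add_sub_cancel _ _⟩⟩
    _ ↔ _ := exists_congr fun a =>
      (Submodule.Quotient.eq (x := a • ⟨s, hs⟩) (Submodule.comap I.subtype J)).symm

end ExtVanishing

section Variables

open scoped Pointwise

variable {σ R : Type*} [CommRing R]

lemma isWeaklyRegular_quotient_cons_iff {I : Ideal R} {r : R} {rs : List R} :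
    RingTheory.Sequence.IsWeaklyRegular (R ⧸ I) (r :: rs) ↔
      (∀ a, r * a ∈ I → a ∈ I) ∧
        RingTheory.Sequence.IsWeaklyRegular (R ⧸ (I ⊔ Ideal.span {r})) rs := by
  rw [RingTheory.Sequence.isWeaklyRegular_cons_iff, isSMulRegular_quotient_iff_mem_of_smul_mem]
  have hmap : r • (⊤ : Submodule R (R ⧸ I)) =
      Submodule.map I.mkQ (Ideal.span {r}) := by
    rw [← Submodule.ideal_span_singleton_smul, ← Submodule.range_mkQ, ← Submodule.map_top,
      ← Submodule.map_smul'', smul_eq_mul, Ideal.mul_top]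
  let e : QuotSMulTop r (R ⧸ I) ≃ₗ[R] R ⧸ (I ⊔ Ideal.span {r}) :=
    Submodule.quotEquivOfEq _ _ hmap ≪≫ₗ
      Submodule.quotientQuotientEquivQuotientSup I (Ideal.span {r})
  rw [e.isWeaklyRegular_congr]
  rfl

lemma mem_span_X_of_X_mul_mem {V : Set σ} {i : σ} (hi : i ∉ V) {p : MvPolynomial σ R}
    (hp : X i * p ∈ Ideal.span (X '' V)) : p ∈ Ideal.span (X '' V) := by
  rw [mem_ideal_span_X_image] at hp ⊢
  intro m hm
  obtain ⟨j, hj, hmj⟩ := hp (m + Finsupp.single i 1) (by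
    rwa [mem_support_iff, add_comm, coeff_X_mul, ← mem_support_iff])
  have hij : i ≠ j := fun h => hi (h ▸ hj)
  exact ⟨j, hj, by simpa [hij] using hmj⟩

lemma isWeaklyRegular_map_X {V : Set σ} {l : List σ} (hl : l.Nodup) (hV : ∀ i ∈ l, i ∉ V) :
    RingTheory.Sequence.IsWeaklyRegular
      (MvPolynomial σ R ⧸ Ideal.span (X (R := R) '' V)) (l.map (X (R := R))) := by
  induction l generalizing V with
  | nil => exact .nil _ _
  | cons i l ih =>
    rw [List.nodup_cons] at hl
    rw [List.forall_mem_cons] at hV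
    rw [List.map_cons, isWeaklyRegular_quotient_cons_iff, sup_comm, ← Ideal.span_insert,
      ← Set.image_insert_eq]
    refine ⟨fun p => mem_span_X_of_X_mul_mem hV.1, ih hl.2 fun j hj => ?_⟩
    rintro (rfl | h)
    exacts [hl.1 hj, hV.2 j hj h]

end Variables

section LinearAlgebra

lemma exists_ne_zero_support_subset_of_ncard_lt {K α β : Type*} [Field K] [Finite α]
    [Finite β] (L : (α → K) →ₗ[K] (β → K)) {E : Set α} {W : Set β} (h : W.ncard < E.ncard) :
    ∃ c ≠ 0, Function.support c ⊆ E ∧ Set.EqOn (L c) 0 W := by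
  classical
  let extend : (E → K) →ₗ[K] (α → K) := Function.ExtendByZero.linearMap K (Subtype.val : E → α)
  have hker : ((LinearMap.funLeft K K (Subtype.val : W → β)) ∘ₗ L ∘ₗ extend).ker ≠ ⊥ := by
    have := Fintype.ofFinite E
    have := Fintype.ofFinite W
    apply LinearMap.ker_ne_bot_of_finrank_lt
    simpa [← Nat.card_eq_fintype_card] using h
  obtain ⟨c, hc, hc0⟩ := Submodule.exists_mem_ne_zero_of_ne_bot hker
  refine ⟨extend c, ?_, ?_, fun B hB => congrFun hc ⟨B, hB⟩⟩
  · contrapose! hc0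
    ext A
    simpa [extend, Subtype.val_injective.extend_apply] using congrFun hc0 A
  · intro A hA
    contrapose! hA
    have : ¬∃ B : E, B.1 = A := by simpa
    simp [extend, Function.extend_apply' _ _ _ this]

end LinearAlgebra

section SquareFree

variable {K : Type} [Field K] {n : ℕ}

lemma sqMon_eq_monomial (T : Finset (Fin n)) :
    sqMon K T = monomial (∑ i ∈ T, Finsupp.single i 1) 1 :=
  (monomial_sum_one _ _).symm

lemma sum_single_one_apply (T : Finset (Fin n)) (j : Fin n) :
    (∑ i ∈ T, Finsupp.single i 1 : Fin n →₀ ℕ) j = if j ∈ T then 1 else 0 := by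
  simp [Finsupp.finsetSum_apply, Finsupp.single_apply]

lemma support_sum_single_one (T : Finset (Fin n)) :
    (∑ i ∈ T, Finsupp.single i 1 : Fin n →₀ ℕ).support = T := by
  ext j
  simp [sum_single_one_apply]

lemma sum_single_one_le_iff {T : Finset (Fin n)} {m : Fin n →₀ ℕ} :
    ∑ i ∈ T, Finsupp.single i 1 ≤ m ↔ T ⊆ m.support := by
  simp only [Finsupp.le_def, sum_single_one_apply, Finset.subset_iff, Finsupp.mem_support_iff]
  exact forall_congr' fun j => by split_ifs with hj <;> simp [hj, Nat.one_le_iff_ne_zero]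

lemma mem_span_sqMon_iff {G : Set (Finset (Fin n))} {p : MvPolynomial (Fin n) K} :
    p ∈ Ideal.span (sqMon K '' G) ↔ ∀ m ∈ p.support, ∃ T ∈ G, T ⊆ m.support := by
  have himage : sqMon K '' G = (fun s => monomial s (1 : K)) ''
      ((fun T => (∑ i ∈ T, Finsupp.single i 1 : Fin n →₀ ℕ)) '' G) := by
    rw [Set.image_image]
    exact Set.image_congr fun T _ => sqMon_eq_monomial T
  simp only [himage, mem_ideal_span_monomial_image, Set.exists_mem_image, sum_single_one_le_iff]

lemma sqMon_mem_span_sqMon_iff {G : Set (Finset (Fin n))} {A : Finset (Fin n)} :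
    sqMon K A ∈ Ideal.span (sqMon K '' G) ↔ ∃ T ∈ G, T ⊆ A := by
  classical
  rw [mem_span_sqMon_iff, sqMon_eq_monomial]
  simp [support_monomial, support_sum_single_one]

lemma X_mul_sqMon {T : Finset (Fin n)} {j : Fin n} (hj : j ∉ T) :
    X j * sqMon K T = sqMon K (insert j T) :=
  (Finset.prod_insert hj).symm

lemma X_mul_sqMon_erase {T : Finset (Fin n)} {j : Fin n} (hj : j ∈ T) :
    X j * sqMon K (T.erase j) = sqMon K T :=
  Finset.mul_prod_erase T X hj

lemma sqMon_mem_maxGraded_pow (T : Finset (Fin n)) : sqMon K T ∈ maxGraded K n ^ T.card := by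
  rw [← Finset.prod_const]
  exact Ideal.prod_mem_prod fun i _ => Ideal.subset_span ⟨i, rfl⟩

lemma smul_sqMon_notMem_maxGraded_pow {T : Finset (Fin n)} {c : K} (hc : c ≠ 0) :
    c • sqMon K T ∉ maxGraded K n ^ (T.card + 1) := fun h => by
  have := (mem_pow_idealOfVars_iff' (T.card + 1) _).1 h (∑ i ∈ T, Finsupp.single i 1) (by simp)
  rw [sqMon_eq_monomial, coeff_smul, coeff_monomial, if_pos rfl, smul_eq_mul, mul_one] at this
  exact hc this

lemma maxGraded_ne_top : maxGraded K n ≠ ⊤ := fun h =>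
  smul_sqMon_notMem_maxGraded_pow (n := n) (T := ∅) (one_ne_zero (α := K)) <| by simp [h]

variable {I J : Ideal (MvPolynomial (Fin n) K)}

open Classical in
/-- The class of the square-free monomial `∏ i ∈ A, X i` in `I / J`, set to `0` when the monomial
does not lie in `I`. -/
noncomputable def sqMonClass (I J : Ideal (MvPolynomial (Fin n) K)) (A : Finset (Fin n)) :
    idealQuot I J :=
  if h : sqMon K A ∈ I then Submodule.Quotient.mk ⟨sqMon K A, h⟩ else 0

lemma sqMonClass_of_mem {A : Finset (Fin n)} (hA : sqMon K A ∈ I) :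
    sqMonClass I J A = Submodule.Quotient.mk ⟨sqMon K A, hA⟩ :=
  dif_pos hA

lemma sqMonClass_eq_zero {A : Finset (Fin n)} (hA : sqMon K A ∈ I → sqMon K A ∈ J) :
    sqMonClass I J A = 0 := by
  by_cases hI : sqMon K A ∈ I
  · rw [sqMonClass_of_mem hI, Submodule.Quotient.mk_eq_zero]
    exact hA hI
  · exact dif_neg hI

lemma X_smul_sqMonClass_erase {A : Finset (Fin n)} {i : Fin n} (hi : i ∈ A)
    (hA : sqMon K (A.erase i) ∈ I) :
    (X i : MvPolynomial (Fin n) K) • sqMonClass I J (A.erase i) = sqMonClass I J A := by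
  have hmul : X i * sqMon K (A.erase i) = sqMon K A := X_mul_sqMon_erase hi
  rw [sqMonClass_of_mem hA, sqMonClass_of_mem (hmul ▸ I.mul_mem_left (X i) hA),
    ← Submodule.Quotient.mk_smul]
  exact congrArg _ (Subtype.ext hmul)

lemma koszulDiff_smul_sqMonClass {c : Finset (Fin n) → K}
    (hc : Function.support c ⊆ {A | sqMon K A ∈ I}) :
    koszulDiff (X : Fin n → MvPolynomial (Fin n) K) (fun A => c A • sqMonClass I J A) =
      fun A => koszulDiff (1 : Fin n → K) c A • sqMonClass I J A := by
  ext1 A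
  simp only [koszulDiff_apply, Finset.sum_smul]
  refine Finset.sum_congr rfl fun i hi => ?_
  by_cases hci : c (A.erase i) = 0
  · simp [hci]
  · rw [smul_comm (X i : MvPolynomial (Fin n) K), X_smul_sqMonClass_erase hi (hc hci),
      Pi.one_apply, one_smul, smul_assoc]

lemma koszulDiff_smul_sqMonClass_eq_zero {d : ℕ} {c : Finset (Fin n) → K}
    (hc : Function.support c ⊆ {A | A.card = d ∧ sqMon K A ∈ I})
    (hdiff : Set.EqOn (koszulDiff (1 : Fin n → K) c) 0
      ({A | A.card = d + 1 ∧ sqMon K A ∈ I} \ {A | A.card = d + 1 ∧ sqMon K A ∈ J})) :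
    koszulDiff (X : Fin n → MvPolynomial (Fin n) K) (fun A => c A • sqMonClass I J A) = 0 := by
  rw [koszulDiff_smul_sqMonClass fun A hA => (hc hA).2]
  ext1 A
  by_cases hA : A.card = d + 1
  · by_cases hIJ : sqMon K A ∈ I ∧ sqMon K A ∉ J
    · simp [hdiff ⟨⟨hA, hIJ.1⟩, fun h => hIJ.2 h.2⟩]
    · simp [sqMonClass_eq_zero (J := J) (by tauto : sqMon K A ∈ I → sqMon K A ∈ J)]
  · rw [koszulDiff_apply_eq_zero (d := d) (fun B hB => by_contra fun h => hB (hc h).1) hA,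
      zero_smul, Pi.zero_apply]

lemma smul_sqMonClass_notMem_smul_top {A : Finset (Fin n)} {c : K} (hc : c ≠ 0)
    (hA : sqMon K A ∈ I) (hI : I ≤ maxGraded K n ^ A.card)
    (hJ : J ≤ maxGraded K n ^ (A.card + 1)) :
    c • sqMonClass I J A ∉
      maxGraded K n • (⊤ : Submodule (MvPolynomial (Fin n) K) (idealQuot I J)) := fun h => by
  rw [sqMonClass_of_mem hA, ← Submodule.Quotient.mk_smul] at h
  have hle : maxGraded K n * I ⊔ J ≤ maxGraded K n ^ (A.card + 1) :=
    sup_le (by rw [pow_succ']; exact Ideal.mul_mono_right hI) hJ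
  exact smul_sqMon_notMem_maxGraded_pow hc (hle (mem_mul_sup_of_mk_mem_smul_top h))

theorem moduleDepth_idealQuot_le {d : ℕ} (hJI : J ≤ I) (hI : I ≤ maxGraded K n ^ d)
    (hJ : J ≤ maxGraded K n ^ (d + 1)) (hrho : rho K (d + 1) I - rho K (d + 1) J < rho K d I) :
    moduleDepth (maxGraded K n) (idealQuot I J) ≤ d := by
  have hsub : {A | A.card = d + 1 ∧ sqMon K A ∈ J} ⊆ {A | A.card = d + 1 ∧ sqMon K A ∈ I} :=
    fun A hA => ⟨hA.1, hJI hA.2⟩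
  rw [rho, rho, ← Set.ncard_sdiff hsub] at hrho
  obtain ⟨c, hc0, hc, hdiff⟩ := exists_ne_zero_support_subset_of_ncard_lt
    (koszulDiff (1 : Fin n → K)) hrho
  obtain ⟨A, hcA⟩ := Function.ne_iff.1 hc0
  obtain ⟨rfl, hAI⟩ := hc hcA
  refine sSup_le ?_
  rintro _ ⟨rs, rfl, hrs, hreg⟩
  refine Nat.cast_le.2 (length_le_of_koszulDiff_eq_zero (fun B hB => ?_)
    (koszulDiff_smul_sqMonClass_eq_zero hc hdiff) (fun ψ hψ => ?_) hrs hreg.toIsWeaklyRegular)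
  · have hcB : c B = 0 := by_contra fun h => hB (hc h).1
    rw [hcB, zero_smul]
  · refine smul_sqMonClass_notMem_smul_top hcA hAI hI hJ ?_
    rw [← congrFun hψ A]
    exact koszulDiff_apply_mem_smul_top X ψ A

lemma extVanishesBelow_quotient_span_X_compl {d : ℕ} {T : Finset (Fin n)} (hd : d ≤ T.card) :
    ExtVanishesBelow (maxGraded K n) d
      (MvPolynomial (Fin n) K ⧸ Ideal.span (X (R := K) '' (T : Set (Fin n))ᶜ)) := by
  refine .of_isWeaklyRegular (ideal_smul_top_quotient_ne_top ?_ maxGraded_ne_top) ?_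
    (isWeaklyRegular_map_X T.nodup_toList ?_) (by simpa using hd)
  · exact Ideal.span_mono (Set.image_subset_range X _)
  · simp only [List.forall_mem_map]
    exact fun i _ => Ideal.subset_span ⟨i, rfl⟩
  · simp

lemma colon_span_sqMon {F : Set (Finset (Fin n))} (hF : IsUpperSet F) {T : Finset (Fin n)}
    (hT : T ∉ F) (hinsert : ∀ j ∉ T, insert j T ∈ F) :
    Submodule.colon (Ideal.span (sqMon K '' F)) {sqMon K T} =
      Ideal.span (X '' (T : Set (Fin n))ᶜ) := by
  refine le_antisymm (fun a ha => ?_) (Ideal.span_le.2 ?_)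
  · rw [Submodule.mem_colon_singleton, smul_eq_mul, mem_span_sqMon_iff] at ha
    rw [mem_ideal_span_X_image]
    intro m hm
    obtain ⟨A, hA, hAm⟩ := ha (m + ∑ i ∈ T, Finsupp.single i 1) (by
      rwa [mem_support_iff, sqMon_eq_monomial, coeff_mul_monomial, mul_one, ← mem_support_iff])
    obtain ⟨j, hjA, hjT⟩ := Finset.not_subset.1 fun hAT => hT (hF hAT hA)
    refine ⟨j, hjT, ?_⟩
    simpa only [Finsupp.mem_support_iff, Finsupp.add_apply, sum_single_one_apply, if_neg hjT,
      add_zero] using hAm hjA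
  · rintro _ ⟨j, hj, rfl⟩
    rw [SetLike.mem_coe, Submodule.mem_colon_singleton, smul_eq_mul, X_mul_sqMon hj]
    exact Ideal.subset_span ⟨_, hinsert j hj, rfl⟩

lemma extVanishesBelow_idealQuot_span_sqMon {d : ℕ} {F F' : Set (Finset (Fin n))}
    (hF : IsUpperSet F) (hF' : IsUpperSet F') (hd : ∀ T ∈ F' \ F, d ≤ T.card) :
    ExtVanishesBelow (maxGraded K n) d
      (idealQuot (Ideal.span (sqMon K '' F')) (Ideal.span (sqMon K '' F))) := by
  induction F using WellFoundedGT.induction with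
  | ind F ih =>
  obtain hempty | hne := (F' \ F).eq_empty_or_nonempty
  · have : Subsingleton (idealQuot (Ideal.span (sqMon K '' F')) (Ideal.span (sqMon K '' F))) := by
      rw [Submodule.Quotient.subsingleton_iff, Submodule.comap_subtype_eq_top]
      exact Ideal.span_mono (Set.image_mono (Set.sdiff_eq_empty.1 hempty))
    exact .of_subsingleton
  obtain ⟨T, hT⟩ := (Set.toFinite (F' \ F)).exists_maximal hne
  have habove {B : Finset (Fin n)} (hB : T < B) : B ∈ F :=
    by_contra fun hBF => hT.not_prop_of_gt hB ⟨hF' hB.le hT.prop.1, hBF⟩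
  have hinsert : IsUpperSet (insert T F) := by
    rintro A B hAB (rfl | hA)
    · exact hAB.eq_or_lt.imp Eq.symm habove
    · exact .inr (hF hAB hA)
  refine .idealQuot_of_colon (Ideal.subset_span ⟨T, hT.prop.1, rfl⟩) ?_ ?_
  · rw [colon_span_sqMon hF hT.prop.2 fun j hj => habove (Finset.ssubset_insert hj)]
    exact extVanishesBelow_quotient_span_X_compl (hd T hT.prop)
  · rw [← Ideal.span_insert, ← Set.image_insert_eq]
    exact ih _ (Set.ssubset_insert hT.prop.2) hinsert fun B hB =>
      hd B ⟨hB.1, fun hBF => hB.2 (.inr hBF)⟩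

lemma isUpperSet_sqMon_mem (L : Ideal (MvPolynomial (Fin n) K)) :
    IsUpperSet {T | sqMon K T ∈ L} := fun A B hAB hA => by
  rw [Set.mem_ofPred_eq, sqMon, ← Finset.prod_sdiff hAB]
  exact L.mul_mem_left _ hA

lemma GenBySqMonOfDeg.span_sqMon_mem {P : ℕ → Prop} {L : Ideal (MvPolynomial (Fin n) K)}
    (hL : GenBySqMonOfDeg K P L) : Ideal.span (sqMon K '' {T | sqMon K T ∈ L}) = L := by
  obtain ⟨G, -, rfl⟩ := hL
  refine le_antisymm (Ideal.span_le.2 (Set.image_subset_iff.2 fun T hT => hT)) (Ideal.span_mono ?_)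
  exact Set.image_mono fun T hT => Ideal.subset_span ⟨T, hT, rfl⟩

lemma GenBySqMonOfDeg.le_card {d : ℕ} {L : Ideal (MvPolynomial (Fin n) K)}
    (hL : GenBySqMonOfDeg K (d ≤ ·) L) {A : Finset (Fin n)} (hA : sqMon K A ∈ L) :
    d ≤ A.card := by
  obtain ⟨G, hG, rfl⟩ := hL
  obtain ⟨T, hT, hTA⟩ := sqMon_mem_span_sqMon_iff.1 hA
  exact (hG T hT).trans (Finset.card_le_card hTA)

lemma GenBySqMonOfDeg.le_maxGraded_pow {d : ℕ} {L : Ideal (MvPolynomial (Fin n) K)}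
    (hL : GenBySqMonOfDeg K (d ≤ ·) L) : L ≤ maxGraded K n ^ d := by
  obtain ⟨G, hG, rfl⟩ := hL
  refine Ideal.span_le.2 (Set.image_subset_iff.2 fun T hT => ?_)
  exact Ideal.pow_le_pow_right (hG T hT) (sqMon_mem_maxGraded_pow T)

theorem le_moduleDepth_idealQuot {d : ℕ} {P : ℕ → Prop} (hI : GenBySqMonOfDeg K (d ≤ ·) I)
    (hJ : GenBySqMonOfDeg K P J)
    (htop : maxGraded K n • (⊤ : Submodule (MvPolynomial (Fin n) K) (idealQuot I J)) ≠ ⊤) :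
    d ≤ moduleDepth (maxGraded K n) (idealQuot I J) := by
  have hExt : ExtVanishesBelow (maxGraded K n) d (idealQuot I J) := by
    rw [← hI.span_sqMon_mem, ← hJ.span_sqMon_mem]
    exact extVanishesBelow_idealQuot_span_sqMon (isUpperSet_sqMon_mem J) (isUpperSet_sqMon_mem I)
      fun T hT => hI.le_card hT.1
  obtain ⟨rs, hlen, hrs, hreg⟩ := hExt.exists_isRegular htop
  exact le_sSup ⟨rs, by rw [hlen], hrs, hreg⟩

lemma card_le_rho {ι : Type*} [Fintype ι] {d : ℕ} {f : ι → Finset (Fin n)}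
    (hf : Function.Injective f) (hcard : ∀ i, (f i).card = d) (hmem : ∀ i, sqMon K (f i) ∈ I) :
    Fintype.card ι ≤ rho K d I := by
  rw [← Nat.card_eq_fintype_card, ← Set.ncard_range_of_injective hf]
  exact Set.ncard_le_ncard (Set.range_subset_iff.2 fun i => ⟨hcard i, hmem i⟩)

theorem stmt_11_general {d : ℕ} (hJI : J ≤ I) (hI : GenBySqMonOfDeg K (d ≤ ·) I)
    (hJ : GenBySqMonOfDeg K (d + 1 ≤ ·) J)
    (hrho : rho K (d + 1) I - rho K (d + 1) J < rho K d I) :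
    moduleDepth (maxGraded K n) (idealQuot I J) = d := by
  refine le_antisymm
    (moduleDepth_idealQuot_le hJI hI.le_maxGraded_pow hJ.le_maxGraded_pow hrho)
    (le_moduleDepth_idealQuot hI hJ fun htop => ?_)
  obtain ⟨A, rfl, hAI⟩ := Set.nonempty_of_ncard_ne_zero (Nat.ne_zero_of_lt hrho)
  exact smul_sqMonClass_notMem_smul_top one_ne_zero hAI hI.le_maxGraded_pow hJ.le_maxGraded_pow
    (htop.ge Submodule.mem_top)

end SquareFree

/-- Theorem 2.2, the main theorem. -/
theorem stmt_11 (n : ℕ) (K : Type) [Field K] (d : ℕ) (hd : 0 < d)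
    (I J : Ideal (MvPolynomial (Fin n) K)) (hJ0 : J ≠ ⊥) (hJI : J < I)
    (r : ℕ) (hr : 0 < r) (f : Fin r → Finset (Fin n)) (hfinj : Function.Injective f)
    (hfd : ∀ i, (f i).card = d)
    (hIgen : I = Ideal.span (Set.range fun i => sqMon K (f i)))
    (hJgen : GenBySqMonOfDeg K (fun k => k = d + 1) J)
    (hrs : rho K (d + 1) I - rho K (d + 1) J < r) :
    moduleDepth (maxGraded K n) (idealQuot I J) = (d : ℕ∞) := by
  subst hIgen
  refine stmt_11_general hJI.le ⟨Set.range f, ?_, by rw [← Set.range_comp]; rfl⟩ ?_ ?_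
  · exact Set.forall_mem_range.2 fun i => (hfd i).ge
  · exact hJgen.imp fun G hG => ⟨fun T hT => (hG.1 T hT).ge, hG.2⟩
  · calc rho K (d + 1) _ - rho K (d + 1) J < Fintype.card (Fin r) := by rwa [Fintype.card_fin]
      _ ≤ rho K d _ := card_le_rho hfinj hfd fun i => Ideal.subset_span (Set.mem_range_self i)
end

section
/- Let S' = K[x_1,…,x_{n-1}], S = S'[x_n], and let V ⊆ U be square-free monomial ideals of S' with U ≠ V; set W = (V + x_n U)S and suppose d := depth_{S'} (S'/U) = depth_{S'} (S'/V). Then d = depth_{S'} (U/V) if and only if d = depth_S (S/W). -/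
open MvPolynomial

/-!
Setting `x = 0` identifies `UR[x]/(V + xU)R[x]` with `U/V` (where `R = S'` and `x` is the last
variable), which gives an exact sequence `0 → U/V → R[x]/W → R[x]/UR[x] → 0`. Since `x` is regular
on `R[x]/UR[x]` with quotient `R/U`, the third term has depth at least `depth (R/U) + 1`, and the
depth lemma (a consequence of Rees' description of depth by the vanishing of `Ext`) shows that the
first two terms have depth `depth (R/U)` simultaneously. The case `U = R` is separate, since `R/U`
then vanishes: there `R[x]/W` is `R/V` with `x` acting as zero.
-/

section Depth

open RingTheory.Sequence
open scoped Pointwise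

variable {R S : Type} [CommRing R] [CommRing S] {I : Ideal R}
variable {M N : Type} [AddCommGroup M] [AddCommGroup N]

theorem length_le_moduleDepth [Module R M] {rs : List R} (hmem : ∀ r ∈ rs, r ∈ I)
    (hreg : IsRegular M rs) : (rs.length : ℕ∞) ≤ moduleDepth I M :=
  le_sSup ⟨rs, rfl, hmem, hreg⟩

theorem exists_isRegular_of_lt_moduleDepth [Module R M] {k : ℕ} (hk : k < moduleDepth I M) :
    ∃ rs : List R, k < rs.length ∧ (∀ r ∈ rs, r ∈ I) ∧ IsRegular M rs := by
  obtain ⟨_, ⟨rs, rfl, hmem, hreg⟩, hlt⟩ := lt_sSup_iff.mp hk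
  exact ⟨rs, by exact_mod_cast hlt, hmem, hreg⟩

theorem moduleDepth_quotSMulTop_add_one_le [Module R M] {x : R} (hxI : x ∈ I)
    (hx : IsSMulRegular M x) [Nontrivial (QuotSMulTop x M)] :
    moduleDepth I (QuotSMulTop x M) + 1 ≤ moduleDepth I M := by
  have hne : {k : ℕ∞ | ∃ rs : List R, k = (rs.length : ℕ∞) ∧ (∀ r ∈ rs, r ∈ I) ∧
      IsRegular (QuotSMulTop x M) rs}.Nonempty := ⟨_, [], rfl, by simp, IsRegular.nil R _⟩
  rw [moduleDepth, ENat.sSup_add hne]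
  refine iSup₂_le ?_
  rintro _ ⟨rs, rfl, hmem, hreg⟩
  exact length_le_moduleDepth (rs := x :: rs) (by simpa using ⟨hxI, hmem⟩)
    ((isRegular_cons_iff M x rs).mpr ⟨hx, hreg⟩)

section Semilinear

variable [Module S M] [Module R N] {φ : S →+* R} (g : M →ₛₗ[φ] N)

theorem isRegular_iff_isRegular_map_of_bijective (hg : Function.Bijective g) (rs : List S) :
    IsRegular M rs ↔ IsRegular N (rs.map φ) :=
  (AddEquiv.ofBijective g hg).isRegular_congr <| List.forall₂_map_right_iff.mpr <|
    List.forall₂_same.mpr fun r _ x => map_smulₛₗ g r x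

theorem moduleDepth_comap_of_bijective (hφ : Function.Surjective φ) (hg : Function.Bijective g) :
    moduleDepth (I.comap φ) M = moduleDepth I N := by
  refine le_antisymm (sSup_le ?_) (sSup_le ?_)
  · rintro _ ⟨rs, rfl, hmem, hreg⟩
    rw [← rs.length_map φ]
    exact length_le_moduleDepth (by simpa using hmem)
      ((isRegular_iff_isRegular_map_of_bijective g hg rs).mp hreg)
  · rintro _ ⟨rs, rfl, hmem, hreg⟩
    obtain ⟨rs, rfl⟩ := hφ.list_map rs
    rw [rs.length_map]
    exact length_le_moduleDepth (by simpa using hmem)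
      ((isRegular_iff_isRegular_map_of_bijective g hg rs).mpr hreg)

theorem comap_smul_top_ne_top_of_surjective (hg : Function.Surjective g)
    (hN : I • (⊤ : Submodule R N) ≠ ⊤) : I.comap φ • (⊤ : Submodule S M) ≠ ⊤ := by
  intro hM
  have hle : I.comap φ • (⊤ : Submodule S M) ≤ (I • (⊤ : Submodule R N)).comap g :=
    Submodule.smul_le.mpr fun r hr m _ => by
      simpa only [Submodule.mem_comap, map_smulₛₗ] using
        Submodule.smul_mem_smul (Ideal.mem_comap.mp hr) Submodule.mem_top
  refine hN (eq_top_iff.mpr fun y _ => ?_)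
  obtain ⟨m, rfl⟩ := hg y
  exact hle (hM.ge Submodule.mem_top)

theorem moduleDepth_add_one_le_of_ker_eq_smul_top [Nontrivial N] (hφ : Function.Surjective φ)
    (hg : Function.Surjective g) {x : S} (hxI : φ x ∈ I) (hx : IsSMulRegular M x)
    (hker : LinearMap.ker g = x • ⊤) :
    moduleDepth I N + 1 ≤ moduleDepth (I.comap φ) M := by
  let gbar : QuotSMulTop x M →ₛₗ[φ] N := Submodule.liftQ (x • ⊤) g hker.ge
  have hgbar : Function.Bijective gbar :=
    ⟨LinearMap.ker_eq_bot.mp (Submodule.ker_liftQ_eq_bot' _ g hker.symm),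
      fun y => (hg y).elim fun m hm => ⟨Submodule.Quotient.mk m, hm⟩⟩
  have : Nontrivial (QuotSMulTop x M) := hgbar.surjective.nontrivial
  rw [← moduleDepth_comap_of_bijective gbar hφ hgbar]
  exact moduleDepth_quotSMulTop_add_one_le hxI hx

end Semilinear

theorem moduleDepth_eq_of_linearEquiv [Module R M] [Module R N] (e : M ≃ₗ[R] N) :
    moduleDepth I M = moduleDepth I N := by
  have h := moduleDepth_comap_of_bijective (I := I) e.toLinearMap Function.surjective_id e.bijective
  rwa [Ideal.comap_id] at h

theorem smul_top_ne_top_of_surjective [Module R M] [Module R N] (g : M →ₗ[R] N)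
    (hg : Function.Surjective g) (hN : I • (⊤ : Submodule R N) ≠ ⊤) :
    I • (⊤ : Submodule R M) ≠ ⊤ := by
  have h := comap_smul_top_ne_top_of_surjective g hg hN
  rwa [Ideal.comap_id] at h

theorem moduleDepth_comap_quotient_comap {φ : S →+* R} (hφ : Function.Surjective φ)
    (J : Ideal R) : moduleDepth (I.comap φ) (S ⧸ J.comap φ) = moduleDepth I (R ⧸ J) := by
  let g : (S ⧸ J.comap φ) →ₛₗ[φ] (R ⧸ J) := Submodule.mapQ _ _ φ.toSemilinearMap le_rfl
  refine moduleDepth_comap_of_bijective g hφ ⟨LinearMap.ker_eq_bot.mp ?_, ?_⟩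
  · exact Submodule.ker_liftQ_eq_bot _ _ _ fun s hs =>
      (Submodule.Quotient.mk_eq_zero J).mp hs
  · rintro ⟨r⟩
    obtain ⟨s, rfl⟩ := hφ r
    exact ⟨Submodule.Quotient.mk s, rfl⟩

end Depth

section DepthLemma

open RingTheory.Sequence CategoryTheory Abelian

variable {R : Type} [CommRing R] [IsNoetherianRing R] {I : Ideal R}

theorem natCast_le_moduleDepth_iff_subsingleton_ext {M : Type} [AddCommGroup M] [Module R M]
    [Module.Finite R M] (hM : I • (⊤ : Submodule R M) ≠ ⊤) {k : ℕ} :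
    k ≤ moduleDepth I M ↔ ∀ i < k,
      Subsingleton (Ext (ModuleCat.of R (Shrink.{0} (R ⧸ I))) (ModuleCat.of R M) i) := by
  have rees (n : ℕ) : (∃ rs : List R, rs.length = n ∧ (∀ r ∈ rs, r ∈ I) ∧ IsRegular M rs) ↔
      ∀ i < n, Subsingleton
        (Ext (ModuleCat.of R (Shrink.{0} (R ⧸ I))) (ModuleCat.of R M) i) :=
    (ModuleCat.exists_isRegular_tfae I n (ModuleCat.of R M) hM.lt_top).out 3 1
  refine ⟨fun hk i hi => ?_, fun hk => ?_⟩
  · obtain ⟨rs, hlt, hmem, hreg⟩ :=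
      exists_isRegular_of_lt_moduleDepth (lt_of_lt_of_le (by exact_mod_cast hi) hk)
    exact (rees rs.length).mp ⟨rs, rfl, hmem, hreg⟩ i hlt
  · obtain ⟨rs, rfl, hmem, hreg⟩ := (rees k).mpr hk
    exact length_le_moduleDepth hmem hreg

variable {A B C : Type} [AddCommGroup A] [AddCommGroup B] [AddCommGroup C]
  [Module R A] [Module R B] [Module R C]

variable {f : A →ₗ[R] B} {g : B →ₗ[R] C}

theorem min_moduleDepth_le_of_exact [Module.Finite R B] (hf : Function.Injective f)
    (hg : Function.Surjective g) (hfg : Function.Exact f g)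
    (hA : I • (⊤ : Submodule R A) ≠ ⊤) (hC : I • (⊤ : Submodule R C) ≠ ⊤) :
    min (moduleDepth I A) (moduleDepth I C) ≤ moduleDepth I B := by
  have : Module.Finite R A := .of_injective f hf
  have : Module.Finite R C := .of_surjective g hg
  have hB := smul_top_ne_top_of_surjective g hg hC
  refine ENat.forall_natCast_le_iff_le.mp fun k hk => ?_
  rw [le_min_iff, natCast_le_moduleDepth_iff_subsingleton_ext hA,
    natCast_le_moduleDepth_iff_subsingleton_ext hC] at hk
  rw [natCast_le_moduleDepth_iff_subsingleton_ext hB]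
  refine fun i hi => subsingleton_of_forall_eq 0 fun b => ?_
  have hExtA := hk.1 i hi
  have hExtC := hk.2 i hi
  obtain ⟨a, rfl⟩ := Ext.covariant_sequence_exact₂ _
    (ModuleCat.shortComplex_shortExact (.moduleCatMk f g hfg.linearMap_comp_eq_zero) hfg hf hg)
    b (hExtC.elim _ _)
  have ha : a = 0 := hExtA.elim a 0
  rw [ha]
  exact Ext.zero_comp ..

theorem min_moduleDepth_add_one_le_of_exact [Module.Finite R B] (hf : Function.Injective f)
    (hg : Function.Surjective g) (hfg : Function.Exact f g)
    (hA : I • (⊤ : Submodule R A) ≠ ⊤) (hC : I • (⊤ : Submodule R C) ≠ ⊤) :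
    min (moduleDepth I B) (moduleDepth I C + 1) ≤ moduleDepth I A := by
  have : Module.Finite R A := .of_injective f hf
  have : Module.Finite R C := .of_surjective g hg
  have hB := smul_top_ne_top_of_surjective g hg hC
  let S := ShortComplex.moduleCatMk f g hfg.linearMap_comp_eq_zero
  have hS : S.ShortExact := ModuleCat.shortComplex_shortExact S hfg hf hg
  refine ENat.forall_natCast_le_iff_le.mp fun k hk => ?_
  rw [le_min_iff, natCast_le_moduleDepth_iff_subsingleton_ext hB] at hk
  rw [natCast_le_moduleDepth_iff_subsingleton_ext hA]
  refine fun i hi => subsingleton_of_forall_eq 0 fun a => ?_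
  have hExtB := hk.1 i hi
  obtain _ | i := i
  · have := hS.mono_f
    exact Ext.postcomp_mk₀_injective_of_mono _ S.f (hExtB.elim _ _)
  · have hi' : ((i + 1 : ℕ) : ℕ∞) ≤ moduleDepth I C := by
      refine (ENat.add_le_add_iff_right ENat.one_ne_top).mp (le_trans ?_ hk.2)
      exact_mod_cast hi
    have hExtC := (natCast_le_moduleDepth_iff_subsingleton_ext hC).mp hi' i i.lt_succ_self
    obtain ⟨c, rfl⟩ := Ext.covariant_sequence_exact₁ _ hS a (hExtB.elim _ _) rfl
    have hc : c = 0 := hExtC.elim c 0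
    rw [hc]
    exact Ext.zero_comp ..

theorem moduleDepth_eq_iff_of_exact [Module.Finite R B] (hf : Function.Injective f)
    (hg : Function.Surjective g) (hfg : Function.Exact f g)
    (hA : I • (⊤ : Submodule R A) ≠ ⊤) (hC : I • (⊤ : Submodule R C) ≠ ⊤)
    {d : ℕ∞} (hd : d + 1 ≤ moduleDepth I C) : moduleDepth I A = d ↔ moduleDepth I B = d := by
  have hAB := min_moduleDepth_le_of_exact hf hg hfg hA hC
  have hBA := min_moduleDepth_add_one_le_of_exact hf hg hfg hA hC
  obtain rfl | hd_ne_top := eq_or_ne d ⊤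
  · have hC_top : moduleDepth I C = ⊤ := by simpa using hd
    rw [hC_top, min_top_right] at hAB
    rw [hC_top, top_add, min_top_right] at hBA
    rw [le_antisymm hAB hBA]
  · have hdC : d < moduleDepth I C := (ENat.add_one_le_iff hd_ne_top).mp hd
    have hdC' : d < moduleDepth I C + 1 := hdC.trans_le le_self_add
    rw [min_le_iff] at hAB hBA
    constructor <;> rintro rfl
    · exact le_antisymm (hBA.resolve_right hdC'.not_ge) (hAB.elim id hdC.le.trans)
    · exact le_antisymm (hAB.resolve_right hdC.not_ge) (hBA.elim id hdC'.le.trans)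

end DepthLemma

section Splice

open scoped Polynomial Pointwise

variable {R : Type*} [CommRing R] {U V : Ideal R}

/-- The ideal `W = (V + xU)R[x]` of `R[x]`: for `V ≤ U`, the polynomials whose constant coefficient
lies in `V` and whose other coefficients lie in `U`. -/
noncomputable def splice (V U : Ideal R) : Ideal R[X] :=
  V.map Polynomial.C + Ideal.span {Polynomial.X} * U.map Polynomial.C

theorem mem_splice_iff (hVU : V ≤ U) {f : R[X]} :
    f ∈ splice V U ↔ f.coeff 0 ∈ V ∧ ∀ k, f.coeff (k + 1) ∈ U := by
  constructor
  · intro hf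
    obtain ⟨a, ha, _, hXb, rfl⟩ := Submodule.mem_sup.mp hf
    obtain ⟨b, hb, rfl⟩ := Ideal.mem_span_singleton_mul.mp hXb
    rw [Ideal.mem_map_C_iff] at ha hb
    exact ⟨by simpa using ha 0, fun k => by simpa using add_mem (hVU (ha (k + 1))) (hb k)⟩
  · rintro ⟨h0, hsucc⟩
    rw [← f.divX_mul_X_add, add_comm, mul_comm]
    refine Submodule.add_mem_sup (Ideal.mem_map_of_mem _ h0)
      (Ideal.mul_mem_mul (Ideal.mem_span_singleton_self _) (Ideal.mem_map_C_iff.mpr fun k => ?_))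
    rw [Polynomial.coeff_divX]
    exact hsucc k

theorem splice_le_map_C (hVU : V ≤ U) : splice V U ≤ U.map Polynomial.C :=
  sup_le (Ideal.map_mono hVU) Ideal.mul_le_right

theorem splice_top : splice V ⊤ = V.comap Polynomial.constantCoeff := by
  ext f
  simp [mem_splice_iff le_top]

theorem isSMulRegular_X_quotient_map_C : IsSMulRegular (R[X] ⧸ U.map Polynomial.C)
    (Polynomial.X : R[X]) := by
  rw [isSMulRegular_quotient_iff_mem_of_smul_mem]
  intro f hf
  rw [Ideal.mem_map_C_iff] at hf ⊢
  exact fun k => by simpa using hf (k + 1)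

/-- The map `R[x]/UR[x] → R/U` setting `x = 0`. -/
noncomputable def constantCoeffQuot (U : Ideal R) :
    (R[X] ⧸ U.map Polynomial.C) →ₛₗ[(Polynomial.constantCoeff : R[X] →+* R)] (R ⧸ U) :=
  Submodule.mapQ _ _ Polynomial.constantCoeff.toSemilinearMap fun _ hf =>
    Ideal.mem_map_C_iff.mp hf 0

theorem constantCoeffQuot_surjective : Function.Surjective (constantCoeffQuot U) := by
  rintro ⟨r⟩
  exact ⟨Submodule.Quotient.mk (Polynomial.C r),
    congrArg Submodule.Quotient.mk Polynomial.coeff_C_zero⟩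

theorem ker_constantCoeffQuot :
    LinearMap.ker (constantCoeffQuot U) = (Polynomial.X : R[X]) • ⊤ := by
  ext y
  obtain ⟨f, rfl⟩ := Submodule.Quotient.mk_surjective _ y
  rw [LinearMap.mem_ker, Submodule.mem_smul_pointwise_iff_exists]
  constructor
  · intro hf
    have h0 : f.coeff 0 ∈ U := (Submodule.Quotient.mk_eq_zero U).mp hf
    refine ⟨Submodule.Quotient.mk f.divX, trivial, (Submodule.Quotient.eq _).mpr ?_⟩
    have hdiv : (Polynomial.X : R[X]) • f.divX - f = -Polynomial.C (f.coeff 0) := by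
      linear_combination f.X_mul_divX_add
    rw [hdiv]
    exact neg_mem (Ideal.mem_map_of_mem Polynomial.C h0)
  · rintro ⟨y, -, hy⟩
    rw [← hy, map_smulₛₗ, Polynomial.constantCoeff_apply, Polynomial.coeff_X_zero, zero_smul]

end Splice

section IdealQuot

open scoped Polynomial

variable {R : Type} [CommRing R] {I U V : Ideal R}

/-- The map `UR[x]/(V + xU)R[x] → U/V` setting `x = 0`. -/
noncomputable def constantCoeffIdealQuot (hVU : V ≤ U) :
    idealQuot (U.map Polynomial.C) (splice V U)
      →ₛₗ[(Polynomial.constantCoeff : R[X] →+* R)] idealQuot U V :=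
  Submodule.mapQ _ _
    (Polynomial.constantCoeff.toSemilinearMap.restrict fun _ hf => Ideal.mem_map_C_iff.mp hf 0)
    fun _ hf => ((mem_splice_iff hVU).mp hf).1

theorem constantCoeffIdealQuot_bijective (hVU : V ≤ U) :
    Function.Bijective (constantCoeffIdealQuot hVU) := by
  constructor
  · refine LinearMap.ker_eq_bot.mp (Submodule.ker_liftQ_eq_bot _ _ _ fun f hf => ?_)
    have hV : (f : R[X]).coeff 0 ∈ V :=
      (Submodule.Quotient.mk_eq_zero (Submodule.comap U.subtype V)).mp hf
    exact (mem_splice_iff hVU).mpr ⟨hV, fun k => Ideal.mem_map_C_iff.mp f.2 (k + 1)⟩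
  · rintro ⟨u⟩
    exact ⟨Submodule.Quotient.mk ⟨Polynomial.C u, Ideal.mem_map_of_mem _ u.2⟩,
      congrArg Submodule.Quotient.mk (Subtype.ext Polynomial.coeff_C_zero)⟩

/-- The inclusion `U/V → R/V`. -/
noncomputable def idealQuotInclusion (U V : Ideal R) : idealQuot U V →ₗ[R] R ⧸ V :=
  Submodule.mapQ _ _ U.subtype le_rfl

theorem idealQuotInclusion_injective : Function.Injective (idealQuotInclusion U V) :=
  LinearMap.ker_eq_bot.mp <| Submodule.ker_liftQ_eq_bot _ _ _ fun _ hu =>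
    (Submodule.Quotient.mk_eq_zero V).mp hu

theorem exact_idealQuotInclusion_factor (hVU : V ≤ U) :
    Function.Exact (idealQuotInclusion U V) (Submodule.factor hVU) := by
  intro y
  obtain ⟨r, rfl⟩ := Submodule.Quotient.mk_surjective _ y
  constructor
  · intro hr
    exact ⟨Submodule.Quotient.mk ⟨r, (Submodule.Quotient.mk_eq_zero U).mp hr⟩, rfl⟩
  · rintro ⟨y, hy⟩
    obtain ⟨u, rfl⟩ := Submodule.Quotient.mk_surjective _ y
    rw [← hy]
    exact (Submodule.Quotient.mk_eq_zero U).mpr u.2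

/-- The isomorphism `⊤/V ≃ R/V`, where `⊤ = R` is the unit ideal. -/
noncomputable def idealQuotTopEquiv (V : Ideal R) : idealQuot ⊤ V ≃ₗ[R] R ⧸ V :=
  LinearEquiv.ofBijective (idealQuotInclusion ⊤ V) ⟨idealQuotInclusion_injective, by
    rintro ⟨r⟩
    exact ⟨Submodule.Quotient.mk ⟨r, trivial⟩, rfl⟩⟩

theorem moduleDepth_idealQuot_top_eq_quotient_splice :
    moduleDepth I (idealQuot ⊤ V) =
      moduleDepth (I.comap Polynomial.constantCoeff) (R[X] ⧸ splice V ⊤) := by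
  rw [splice_top, moduleDepth_comap_quotient_comap Polynomial.constantCoeff_surjective,
    moduleDepth_eq_of_linearEquiv (idealQuotTopEquiv V)]

theorem moduleDepth_quotient_add_one_le_quotient_map_C (hU : U ≠ ⊤) :
    moduleDepth I (R ⧸ U) + 1 ≤
      moduleDepth (I.comap Polynomial.constantCoeff) (R[X] ⧸ U.map Polynomial.C) := by
  have : Nontrivial (R ⧸ U) := Ideal.Quotient.nontrivial_iff.mpr hU
  exact moduleDepth_add_one_le_of_ker_eq_smul_top (constantCoeffQuot U)
    Polynomial.constantCoeff_surjective constantCoeffQuot_surjective (by simp)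
    isSMulRegular_X_quotient_map_C ker_constantCoeffQuot

theorem moduleDepth_idealQuot_eq_iff_quotient_splice [IsNoetherianRing R] (hVU : V ≤ U)
    (hUV : I • (⊤ : Submodule R (idealQuot U V)) ≠ ⊤) (hU : I • (⊤ : Submodule R (R ⧸ U)) ≠ ⊤) :
    moduleDepth I (idealQuot U V) = moduleDepth I (R ⧸ U) ↔
      moduleDepth (I.comap Polynomial.constantCoeff) (R[X] ⧸ splice V U) =
        moduleDepth I (R ⧸ U) := by
  have hU_ne_top : U ≠ ⊤ := by
    rintro rfl
    exact hU (Subsingleton.elim _ _)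
  have hbij := constantCoeffIdealQuot_bijective hVU
  rw [← moduleDepth_comap_of_bijective (constantCoeffIdealQuot hVU)
    Polynomial.constantCoeff_surjective hbij]
  exact moduleDepth_eq_iff_of_exact idealQuotInclusion_injective
    (Submodule.factor_surjective (splice_le_map_C hVU))
    (exact_idealQuotInclusion_factor (splice_le_map_C hVU))
    (comap_smul_top_ne_top_of_surjective _ hbij.surjective hUV)
    (comap_smul_top_ne_top_of_surjective _ constantCoeffQuot_surjective hU)
    (moduleDepth_quotient_add_one_le_quotient_map_C hU_ne_top)

end IdealQuot

section Graded

variable {R : Type} [CommRing R] {U V : Ideal R}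
variable {σ : Type*} [SetLike σ R] [AddSubmonoidClass σ R] {𝒜 : ℕ → σ} [GradedRing 𝒜]

theorem le_of_mul_mem_of_sub_one_mem_irrelevant (hU : U.IsHomogeneous 𝒜)
    (hV : V.IsHomogeneous 𝒜) {r : R} (hr : r - 1 ∈ HomogeneousIdeal.irrelevant 𝒜)
    (hrU : ∀ u ∈ U, r * u ∈ V) : U ≤ V := by
  classical
  have hr0 : (DirectSum.decompose 𝒜 r 0 : R) = 1 := by
    rw [HomogeneousIdeal.mem_irrelevant_iff, map_sub, sub_eq_zero] at hr
    rw [← GradedRing.proj_apply, hr, GradedRing.proj_apply,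
      DirectSum.decompose_of_mem_same 𝒜 SetLike.GradedOne.one_mem]
  intro u hu
  rw [← DirectSum.sum_support_decompose 𝒜 u]
  refine sum_mem fun i _ => ?_
  have hi := hV (0 + i) (hrU _ (hU i hu))
  rwa [DirectSum.coe_decompose_mul_add_of_right_mem 𝒜 (SetLike.coe_mem _), hr0, one_mul] at hi

theorem irrelevant_smul_top_idealQuot_ne_top (hU : U.IsHomogeneous 𝒜) (hV : V.IsHomogeneous 𝒜)
    (hfg : U.FG) (hUV : ¬U ≤ V) :
    (HomogeneousIdeal.irrelevant 𝒜).toIdeal • (⊤ : Submodule R (idealQuot U V)) ≠ ⊤ := by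
  intro htop
  have : Module.Finite R U := Module.Finite.iff_fg.mpr hfg
  obtain ⟨r, hr, hrU⟩ := Submodule.exists_sub_one_mem_and_smul_eq_zero_of_fg_of_le_smul _ _
    Module.Finite.fg_top htop.ge
  refine hUV (le_of_mul_mem_of_sub_one_mem_irrelevant hU hV hr fun u hu => ?_)
  exact (Submodule.Quotient.mk_eq_zero (Submodule.comap U.subtype V)).mp
    (hrU (Submodule.Quotient.mk ⟨u, hu⟩) trivial)

theorem irrelevant_smul_top_quotient_ne_top (hU : U.IsHomogeneous 𝒜) (hU_ne_top : U ≠ ⊤) :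
    (HomogeneousIdeal.irrelevant 𝒜).toIdeal • (⊤ : Submodule R (R ⧸ U)) ≠ ⊤ :=
  smul_top_ne_top_of_surjective (idealQuotTopEquiv U).symm.toLinearMap
    (idealQuotTopEquiv U).symm.surjective <|
    irrelevant_smul_top_idealQuot_ne_top (Ideal.IsHomogeneous.top 𝒜) hU
      ⟨{1}, by simp⟩ (by rwa [top_le_iff])

end Graded

section LastVariable

open scoped Polynomial

variable {A : Type*} [CommRing A] {n : ℕ}

/-- The identification `A[x_1,…,x_{n+1}] ≃ A[x_1,…,x_n][x]` with `x = x_{n+1}`. -/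
noncomputable def lastVarEquiv (A : Type*) [CommRing A] (n : ℕ) :
    MvPolynomial (Fin (n + 1)) A ≃+* (MvPolynomial (Fin n) A)[X] :=
  ((renameEquiv A finSuccEquivLast).trans (optionEquivLeft A (Fin n))).toRingEquiv

theorem lastVarEquiv_C (a : A) : lastVarEquiv A n (C a) = Polynomial.C (C a) := by
  simp [lastVarEquiv]

theorem lastVarEquiv_X_castSucc (i : Fin n) :
    lastVarEquiv A n (X i.castSucc) = Polynomial.C (X i) := by
  simp [lastVarEquiv]

theorem lastVarEquiv_X_last : lastVarEquiv A n (X (Fin.last n)) = Polynomial.X := by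
  simp [lastVarEquiv]

theorem lastVarEquiv_rename_castSucc (p : MvPolynomial (Fin n) A) :
    lastVarEquiv A n (rename Fin.castSucc p) = Polynomial.C p := by
  induction p using MvPolynomial.induction_on with
  | C a => rw [rename_C, lastVarEquiv_C]
  | add p q hp hq => rw [map_add, map_add, hp, hq, Polynomial.C_add]
  | mul_X p i hp => rw [map_mul, map_mul, hp, rename_X, lastVarEquiv_X_castSucc, Polynomial.C_mul]

theorem constantCoeff_constantCoeff_lastVarEquiv (p : MvPolynomial (Fin (n + 1)) A) :
    constantCoeff (Polynomial.constantCoeff (lastVarEquiv A n p)) = constantCoeff p := by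
  induction p using MvPolynomial.induction_on with
  | C a => simp [lastVarEquiv_C]
  | add p q hp hq => simp only [map_add, hp, hq]
  | mul_X p i _ =>
    induction i using Fin.lastCases <;> simp [lastVarEquiv_X_castSucc, lastVarEquiv_X_last]

theorem comap_lastVarEquiv_splice (U V : Ideal (MvPolynomial (Fin n) A)) :
    (splice V U).comap (lastVarEquiv A n).toRingHom =
      V.map (rename Fin.castSucc) + Ideal.span {X (Fin.last n)} * U.map (rename Fin.castSucc) := by
  have hmap (J : Ideal (MvPolynomial (Fin n) A)) :
      (J.map (rename Fin.castSucc)).map (lastVarEquiv A n).toRingHom = J.map Polynomial.C :=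
    (Ideal.map_map (rename Fin.castSucc).toRingHom _).trans
      (congrArg J.map (RingHom.ext lastVarEquiv_rename_castSucc))
  have hbij : Function.Bijective (lastVarEquiv A n).toRingHom := (lastVarEquiv A n).bijective
  have hX : (lastVarEquiv A n).toRingHom (X (Fin.last n)) = Polynomial.X := lastVarEquiv_X_last
  have hW : (V.map (rename Fin.castSucc) + Ideal.span {X (Fin.last n)} *
      U.map (rename Fin.castSucc)).map (lastVarEquiv A n).toRingHom = splice V U := by
    rw [Ideal.add_eq_sup, Ideal.map_sup, Ideal.map_mul, Ideal.map_span, Set.image_singleton,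
      hmap, hmap, hX, splice, Ideal.add_eq_sup]
  rw [← hW, Ideal.comap_map_of_bijective _ hbij]

end LastVariable

section MaxGraded

open scoped Polynomial

attribute [local instance] MvPolynomial.gradedAlgebra

variable {K : Type} [Field K] {n : ℕ}

theorem mem_maxGraded_iff {p : MvPolynomial (Fin n) K} :
    p ∈ maxGraded K n ↔ constantCoeff p = 0 := by
  rw [← pow_one (maxGraded K n)]
  refine (mem_pow_idealOfVars_iff' ..).trans ?_
  simp only [Nat.lt_one_iff, Finsupp.degree_eq_zero_iff, forall_eq, constantCoeff_eq]

theorem maxGraded_eq_irrelevant :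
    maxGraded K n = (HomogeneousIdeal.irrelevant (homogeneousSubmodule (Fin n) K)).toIdeal := by
  ext p
  have hproj : GradedRing.proj (homogeneousSubmodule (Fin n) K) 0 p = C (coeff 0 p) :=
    (decomposition.decompose'_apply p 0).trans (homogeneousComponent_zero p)
  rw [mem_maxGraded_iff, constantCoeff_eq, HomogeneousIdeal.mem_iff,
    HomogeneousIdeal.mem_irrelevant_iff, hproj, C_eq_zero]

theorem GenBySqMonOfDeg.isHomogeneous {P : ℕ → Prop} {U : Ideal (MvPolynomial (Fin n) K)}
    (hU : GenBySqMonOfDeg K P U) : U.IsHomogeneous (homogeneousSubmodule (Fin n) K) := by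
  obtain ⟨G, -, rfl⟩ := hU
  refine Ideal.homogeneous_span _ _ ?_
  rintro _ ⟨T, -, rfl⟩
  exact ⟨_, IsHomogeneous.prod T _ _ fun i _ => isHomogeneous_X K i⟩

theorem maxGraded_succ_eq_comap_lastVarEquiv :
    maxGraded K (n + 1) =
      ((maxGraded K n).comap Polynomial.constantCoeff).comap (lastVarEquiv K n).toRingHom := by
  ext p
  rw [Ideal.mem_comap, Ideal.mem_comap, mem_maxGraded_iff, mem_maxGraded_iff]
  exact (constantCoeff_constantCoeff_lastVarEquiv p).congr_left.symm

theorem moduleDepth_maxGraded_succ_quotient (U V : Ideal (MvPolynomial (Fin n) K)) :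
    moduleDepth (maxGraded K (n + 1)) (MvPolynomial (Fin (n + 1)) K ⧸
        (V.map (rename Fin.castSucc) +
          Ideal.span {X (Fin.last n)} * U.map (rename Fin.castSucc))) =
      moduleDepth ((maxGraded K n).comap Polynomial.constantCoeff)
        ((MvPolynomial (Fin n) K)[X] ⧸ splice V U) := by
  rw [maxGraded_succ_eq_comap_lastVarEquiv, ← comap_lastVarEquiv_splice]
  exact moduleDepth_comap_quotient_comap (lastVarEquiv K n).surjective _

theorem stmt_13_general (n : ℕ) (K : Type) [Field K]
    (U V : Ideal (MvPolynomial (Fin n) K))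
    (hU : U.IsHomogeneous (homogeneousSubmodule (Fin n) K))
    (hV : V.IsHomogeneous (homogeneousSubmodule (Fin n) K))
    (hVU : V ≤ U) (hne : U ≠ V)
    (W : Ideal (MvPolynomial (Fin (n + 1)) K))
    (hW : W = Ideal.map (rename Fin.castSucc) V +
      Ideal.span {(X (Fin.last n) : MvPolynomial (Fin (n + 1)) K)} *
        Ideal.map (rename Fin.castSucc) U)
    (d : ℕ∞)
    (hdU : moduleDepth (maxGraded K n) (MvPolynomial (Fin n) K ⧸ U) = d) :
    moduleDepth (maxGraded K n) (idealQuot U V) = d ↔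
      moduleDepth (maxGraded K (n + 1)) (MvPolynomial (Fin (n + 1)) K ⧸ W) = d := by
  subst hW hdU
  rw [moduleDepth_maxGraded_succ_quotient]
  obtain rfl | hU_ne_top := eq_or_ne U ⊤
  · rw [moduleDepth_idealQuot_top_eq_quotient_splice]
  · rw [maxGraded_eq_irrelevant]
    exact moduleDepth_idealQuot_eq_iff_quotient_splice hVU
      (irrelevant_smul_top_idealQuot_ne_top hU hV (IsNoetherian.noetherian U)
        fun hUV => hne (le_antisymm hUV hVU))
      (irrelevant_smul_top_quotient_ne_top hU hU_ne_top)

end MaxGraded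

/-- Lemma 3.2.  Here `S' = K[x_1,…,x_n]` is embedded in
`S = S'[x_{n+1}] = K[x_1,…,x_{n+1}]` via `rename Fin.castSucc`, and the last
variable `X (Fin.last n)` plays the role of `x_n` of the paper. -/
theorem stmt_13 (n : ℕ) (K : Type) [Field K]
    (U V : Ideal (MvPolynomial (Fin n) K))
    (hU : GenBySqMonOfDeg K (fun _ => True) U)
    (hV : GenBySqMonOfDeg K (fun _ => True) V)
    (hVU : V ≤ U) (hne : U ≠ V)
    (W : Ideal (MvPolynomial (Fin (n + 1)) K))
    (hW : W = Ideal.map (rename Fin.castSucc) V +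
      Ideal.span {(X (Fin.last n) : MvPolynomial (Fin (n + 1)) K)} *
        Ideal.map (rename Fin.castSucc) U)
    (d : ℕ∞)
    (hdU : moduleDepth (maxGraded K n) (MvPolynomial (Fin n) K ⧸ U) = d)
    (hdV : moduleDepth (maxGraded K n) (MvPolynomial (Fin n) K ⧸ V) = d) :
    moduleDepth (maxGraded K n) (idealQuot U V) = d ↔
      moduleDepth (maxGraded K (n + 1)) (MvPolynomial (Fin (n + 1)) K ⧸ W) = d :=
  stmt_13_general n K U V hU.isHomogeneous hV.isHomogeneous hVU hne W hW d hdU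
end
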